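/- arXiv:2003.04703 — 7 statements merged into one kernel-verified Lean document; each statement's English description precedes it below -/
import Mathlib

section
/- (Fixpoint characterization.) For an n×n matrix A and vectors b, x over the extended reals ℝ̄ with max-plus operations, the inequality x ≥ A ⊗ x ⊕ b holds if and only if x ≥ A* ⊗ b and x = A* ⊗ x. -/
/-!
The inequality `A ⊗ x ≤ x` propagates to every power of `A`, hence to the Kleene star, because adding
a fixed element on the right of a supremum is compatible with upper bounds in `EReal`
(`iSup_add_le_of_forall`); this is `star_add_le`. Conversely the star dominates both `E` and `A`
(`zero_le_star_diag`, `le_star`), so bounds on `A* ⊗ b` and `A* ⊗ x` give bounds on `b` and `A ⊗ x`.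
-/

noncomputable section

/-- Max-plus matrix product over the extended reals (`-∞` is absorbing for `+` in `EReal`). -/
def mpMul {m n p : ℕ} (A : Matrix (Fin m) (Fin n) EReal) (B : Matrix (Fin n) (Fin p) EReal) :
    Matrix (Fin m) (Fin p) EReal :=
  fun i j => ⨆ k, A i k + B k j

/-- Max-plus matrix-vector product. -/
def mpMulVec {m n : ℕ} (A : Matrix (Fin m) (Fin n) EReal) (x : Fin n → EReal) :
    Fin m → EReal :=
  fun i => ⨆ k, A i k + x k

/-- Min-plus addition on `EReal`: `+∞` is absorbing. -/
def mnAdd (a b : EReal) : EReal := -((-a) + (-b))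

/-- Min-plus matrix product. -/
def mnMul {m n p : ℕ} (A : Matrix (Fin m) (Fin n) EReal) (B : Matrix (Fin n) (Fin p) EReal) :
    Matrix (Fin m) (Fin p) EReal :=
  fun i j => ⨅ k, mnAdd (A i k) (B k j)

/-- Min-plus matrix-vector product. -/
def mnMulVec {m n : ℕ} (A : Matrix (Fin m) (Fin n) EReal) (x : Fin n → EReal) :
    Fin m → EReal :=
  fun i => ⨅ k, mnAdd (A i k) (x k)

/-- Conjugate matrix: `(conj A) i j = -(A j i)`. -/
def conjM {m n : ℕ} (A : Matrix (Fin m) (Fin n) EReal) : Matrix (Fin n) (Fin m) EReal :=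
  fun i j => -(A j i)

/-- Max-plus identity matrix. -/
def mpId (n : ℕ) : Matrix (Fin n) (Fin n) EReal :=
  fun i j => if i = j then 0 else ⊥

/-- Min-plus identity matrix. -/
def mnId (n : ℕ) : Matrix (Fin n) (Fin n) EReal :=
  fun i j => if i = j then 0 else ⊤

/-- Max-plus matrix powers. -/
def mpPow {n : ℕ} (A : Matrix (Fin n) (Fin n) EReal) : ℕ → Matrix (Fin n) (Fin n) EReal
  | 0 => mpId n
  | k + 1 => mpMul A (mpPow A k)

/-- Min-plus matrix powers. -/
def mnPow {n : ℕ} (A : Matrix (Fin n) (Fin n) EReal) : ℕ → Matrix (Fin n) (Fin n) EReal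
  | 0 => mnId n
  | k + 1 => mnMul A (mnPow A k)

/-- Max-plus Kleene star: entrywise supremum of all max-plus powers. -/
def mpStar {n : ℕ} (A : Matrix (Fin n) (Fin n) EReal) : Matrix (Fin n) (Fin n) EReal :=
  fun i j => ⨆ k, mpPow A k i j

/-- Min-plus star: entrywise infimum of all min-plus powers. -/
def mnStar {n : ℕ} (A : Matrix (Fin n) (Fin n) EReal) : Matrix (Fin n) (Fin n) EReal :=
  fun i j => ⨅ k, mnPow A k i j

/-- Entrywise maximum of two matrices (`A ⊕ B`). -/
def mSup {m n : ℕ} (A B : Matrix (Fin m) (Fin n) EReal) : Matrix (Fin m) (Fin n) EReal :=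
  fun i j => A i j ⊔ B i j

/-- Right addition is residuated in `EReal` with `⊥` absorbing, so upper bounds pass to suprema. The
supremum may be empty: then the left-hand side is `⊥`. -/
theorem iSup_add_le_of_forall {ι : Sort*} {f : ι → EReal} {c d : EReal}
    (h : ∀ k, f k + c ≤ d) : (⨆ k, f k) + c ≤ d := by
  rcases eq_or_ne c ⊥ with rfl | hc
  · simp
  rcases eq_or_ne d ⊤ with rfl | hd
  · exact le_top
  exact EReal.add_le_of_le_sub
    (iSup_le fun k => (EReal.le_sub_iff_add_le (Or.inl hc) (Or.inr hd)).2 (h k))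

theorem pow_add_le {n : ℕ} {A : Matrix (Fin n) (Fin n) EReal} {x : Fin n → EReal}
    (h : ∀ i j, A i j + x j ≤ x i) (k : ℕ) (i j : Fin n) : mpPow A k i j + x j ≤ x i := by
  induction k generalizing i with
  | zero =>
    rcases eq_or_ne i j with rfl | hij
    · simp [mpPow, mpId]
    · simp [mpPow, mpId, hij]
  | succ k ih =>
    refine iSup_add_le_of_forall fun l => ?_
    rw [add_assoc]
    exact (add_le_add le_rfl (ih l)).trans (h i l)

theorem star_add_le {n : ℕ} {A : Matrix (Fin n) (Fin n) EReal} {x : Fin n → EReal}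
    (h : ∀ i j, A i j + x j ≤ x i) (i j : Fin n) : mpStar A i j + x j ≤ x i :=
  iSup_add_le_of_forall fun k => pow_add_le h k i j

theorem zero_le_star_diag {n : ℕ} (A : Matrix (Fin n) (Fin n) EReal) (i : Fin n) :
    0 ≤ mpStar A i i :=
  le_iSup_of_le 0 (by simp [mpPow, mpId])

theorem le_star {n : ℕ} (A : Matrix (Fin n) (Fin n) EReal) (i j : Fin n) :
    A i j ≤ mpStar A i j :=
  le_iSup_of_le 1 (le_iSup_of_le j (by simp [mpPow, mpId]))

theorem le_star_mulVec {n : ℕ} (A : Matrix (Fin n) (Fin n) EReal) (y : Fin n → EReal) :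
    y ≤ mpMulVec (mpStar A) y := fun i =>
  le_iSup_of_le i (by simpa using add_le_add (zero_le_star_diag A i) (le_refl (y i)))

/-- fixpoint characterization:
`x ≥ A ⊗ x ⊕ b ↔ (x ≥ A* ⊗ b ∧ x = A* ⊗ x)`. -/
theorem fixpoint_iff {n : ℕ} (A : Matrix (Fin n) (Fin n) EReal) (b x : Fin n → EReal) :
    mpMulVec A x ⊔ b ≤ x ↔ (mpMulVec (mpStar A) b ≤ x ∧ x = mpMulVec (mpStar A) x) := by
  constructor
  · intro h
    have hA : ∀ i j, A i j + x j ≤ x i := fun i j =>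
      (le_iSup (fun k => A i k + x k) j).trans ((le_sup_left.trans h) i)
    have hb : b ≤ x := le_sup_right.trans h
    have hx : mpMulVec (mpStar A) x ≤ x := fun i => iSup_le fun j => star_add_le hA i j
    refine ⟨fun i => iSup_le fun j => ?_, le_antisymm (le_star_mulVec A x) hx⟩
    exact (add_le_add le_rfl (hb j)).trans (star_add_le hA i j)
  · rintro ⟨hb, hx⟩
    refine sup_le (fun i => iSup_le fun j => ?_) ((le_star_mulVec A b).trans hb)
    calc A i j + x j ≤ mpStar A i j + x j := add_le_add (le_star A i j) le_rfl
      _ ≤ mpMulVec (mpStar A) x i := le_iSup (fun k => mpStar A i k + x k) j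
      _ = x i := (congrFun hx i).symm
end
end

section
/- Let A be an n×n matrix with entries in ℝ ∪ {-∞} such that every entry of the max-plus Kleene star A* is a real number (finite). Then a vector x with entries in ℝ ∪ {-∞} satisfies A ⊗ x ≤ x if and only if x lies in the image of A*, i.e. if and only if there exists a vector y with entries in ℝ ∪ {-∞} such that x = A* ⊗ y. -/
/-!
Since `0 ≤ A*` on the diagonal, `x ≤ A* ⊗ x` always. If `A ⊗ x ≤ x`, iterating gives
`A^k ⊗ x ≤ x` for all `k` (`mpPow_add_le`), so `A* ⊗ x ≤ x` and `y = x` is a preimage of `x`.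
Conversely `A ⊗ A* ≤ A*` (`add_mpStar_le`), so `A ⊗ (A* ⊗ y) ≤ A* ⊗ y`. Interchanging sums and
suprema is legitimate because the translating element is never `+∞` (`add_iSup_le_of_ne_top`).
-/

noncomputable section

/-- Translation by an element of `ℝ ∪ {-∞}` is residuated, so bounds pass to suprema. -/
theorem add_iSup_le_of_ne_top {ι : Sort*} {c d : EReal} (hc : c ≠ ⊤) {f : ι → EReal}
    (h : ∀ i, c + f i ≤ d) : c + ⨆ i, f i ≤ d := by
  by_cases hb : c = ⊥
  · simp [hb]
  · rw [add_comm, ← EReal.le_sub_iff_add_le (Or.inl hb) (Or.inl hc)]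
    refine iSup_le fun i => ?_
    rw [EReal.le_sub_iff_add_le (Or.inl hb) (Or.inl hc), add_comm]
    exact h i

/-- A sub-fixed vector of `A` is a sub-fixed vector of every power of `A`. -/
theorem mpPow_add_le {n : ℕ} {A : Matrix (Fin n) (Fin n) EReal} {x : Fin n → EReal}
    (hx : ∀ i, x i ≠ ⊤) (h : mpMulVec A x ≤ x) (k : ℕ) (i j : Fin n) :
    mpPow A k i j + x j ≤ x i := by
  induction k generalizing i with
  | zero =>
    by_cases hij : i = j
    · simp [mpPow, mpId, hij]
    · simp [mpPow, mpId, hij]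
  | succ k ih =>
    change (⨆ l, A i l + mpPow A k l j) + x j ≤ x i
    rw [add_comm]
    refine add_iSup_le_of_ne_top (hx j) fun l => ?_
    calc x j + (A i l + mpPow A k l j) = A i l + (mpPow A k l j + x j) := by
          rw [add_comm, add_assoc]
      _ ≤ A i l + x l := by gcongr; exact ih l
      _ ≤ x i := (le_iSup (fun l => A i l + x l) l).trans (h i)

/-- The entrywise form of `A ⊗ A* ≤ A*`. -/
theorem add_mpStar_le {n : ℕ} {A : Matrix (Fin n) (Fin n) EReal}
    (hA : ∀ i j, A i j ≠ ⊤) (i k j : Fin n) :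
    A i k + mpStar A k j ≤ mpStar A i j :=
  add_iSup_le_of_ne_top (hA i k) fun p =>
    (le_iSup (fun l => A i l + mpPow A p l j) k).trans
      (le_iSup (fun q => mpPow A q i j) (p + 1))

/-- if `A` has entries in `ℝ ∪ {-∞}` and all entries of `A*` are real, then
`A ⊗ x ≤ x ↔ x ∈ Im(A*)` for vectors `x` with entries in `ℝ ∪ {-∞}`. -/
theorem le_iff_im_star {n : ℕ} (A : Matrix (Fin n) (Fin n) EReal)
    (hA : ∀ i j, A i j ≠ ⊤)
    (hAstar : ∀ i j, ∃ r : ℝ, mpStar A i j = (r : EReal))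
    (x : Fin n → EReal) (hx : ∀ i, x i ≠ ⊤) :
    mpMulVec A x ≤ x ↔
      ∃ y : Fin n → EReal, (∀ i, y i ≠ ⊤) ∧ x = mpMulVec (mpStar A) y := by
  constructor
  · intro h
    refine ⟨x, hx, le_antisymm (fun i => ?_) (fun i => iSup_le fun j => ?_)⟩
    · have h0 : (0 : EReal) ≤ mpStar A i i :=
        le_iSup_of_le 0 (by simp [mpPow, mpId])
      calc x i = 0 + x i := (zero_add _).symm
        _ ≤ mpStar A i i + x i := by gcongr
        _ ≤ _ := le_iSup (fun k => mpStar A i k + x k) i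
    · rw [add_comm]
      refine add_iSup_le_of_ne_top (hx j) fun k => ?_
      rw [add_comm]
      exact mpPow_add_le hx h k i j
  · rintro ⟨y, -, rfl⟩ i
    refine iSup_le fun k => add_iSup_le_of_ne_top (hA i k) fun j => ?_
    rw [← add_assoc]
    exact (add_le_add_left (add_mpStar_le hA i k j) (y j)).trans
      (le_iSup (fun j => mpStar A i j + y j) j)
end
end

section
/- Let 𝒜 and ℬ be n×n matrices over the extended reals ℝ̄. If a sequence x : ℕ → ℝ̄^n satisfies 𝒜 ⊗ x(k-1) ≤ x(k) ≤ ℬ ⊗' x(k-1) for all k ≥ 1, then for every n ≥ 1 the inequality (ℬ^♯)^n ⊗ 𝒜^n ⊗ x(0) ≤ x(0) holds, where (ℬ^♯)^n and 𝒜^n denote max-plus matrix powers. -/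
/-!
Max-plus addition on the extended reals is residuated: `a + c ≤ y ↔ a ≤ -(-y + c)`, infinite
values included. Residuation makes right translation by `c` preserve suprema, which gives
`(A ⊗ B) ⊗ x ≤ A ⊗ (B ⊗ x)`, and it turns the min-plus bound `y ≤ mnMulVec ℬ z` into `ℬ^♯ ⊗ y ≤ z`
(`mpMulVec_conjM_le_iff`). Hence `𝒜` pushes the sequence forward, `𝒜^m ⊗ x(0) ≤ x(m)`, while
`ℬ^♯` pulls it back, `(ℬ^♯)^m ⊗ x(m) ≤ x(0)`; monotonicity combines the two.
-/

noncomputable section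

/-- Residuation of max-plus addition; the right-hand side is the min-plus sum of `y` and `-c`. -/
theorem add_le_iff_le_residual (a c y : EReal) : a + c ≤ y ↔ a ≤ -(-y + c) := by
  induction c with
  | bot => simp
  | top =>
    induction a with
    | bot => simp
    | top => induction y <;> simp
    | coe a => induction y <;> simp
  | coe c =>
    induction a with
    | bot => simp
    | top => induction y <;> simp [← EReal.coe_neg, ← EReal.coe_add]
    | coe a =>
      induction y with
      | bot => simp [← EReal.coe_add]
      | top => simp
      | coe y =>
        norm_cast
        constructor <;> intro h <;> linarith

theorem mpMulVec_mono {m n : ℕ} (A : Matrix (Fin m) (Fin n) EReal) {x y : Fin n → EReal}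
    (h : x ≤ y) : mpMulVec A x ≤ mpMulVec A y :=
  fun _ => iSup_mono fun k => add_le_add le_rfl (h k)

theorem mpMulVec_mpMul_le {m n p : ℕ} (A : Matrix (Fin m) (Fin n) EReal)
    (B : Matrix (Fin n) (Fin p) EReal) (x : Fin p → EReal) :
    mpMulVec (mpMul A B) x ≤ mpMulVec A (mpMulVec B x) := by
  intro i
  refine iSup_le fun j => ?_
  rw [add_le_iff_le_residual]
  refine iSup_le fun k => ?_
  rw [← add_le_iff_le_residual, add_assoc]
  exact (add_le_add le_rfl (le_iSup (fun j => B k j + x j) j)).trans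
    (le_iSup (fun k => A i k + mpMulVec B x k) k)

theorem mpMulVec_mpId_le {n : ℕ} (x : Fin n → EReal) : mpMulVec (mpId n) x ≤ x := by
  intro i
  refine iSup_le fun k => ?_
  by_cases h : i = k
  · simp [mpId, h]
  · simp [mpId, h]

/-- The Galois connection between the max-plus action of `ℬ^♯` and the min-plus action of `ℬ`. -/
theorem mpMulVec_conjM_le_iff {m n : ℕ} (B : Matrix (Fin m) (Fin n) EReal)
    (y : Fin m → EReal) (z : Fin n → EReal) :
    mpMulVec (conjM B) y ≤ z ↔ y ≤ mnMulVec B z := by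
  simp only [Pi.le_def, mpMulVec, mnMulVec, conjM, mnAdd, iSup_le_iff, le_iInf_iff]
  rw [forall_comm]
  refine forall_congr' fun i => forall_congr' fun j => ?_
  rw [add_comm, add_le_iff_le_residual, add_comm]

theorem mpPow_forward {n : ℕ} {A : Matrix (Fin n) (Fin n) EReal} {x : ℕ → Fin n → EReal}
    (h : ∀ k, mpMulVec A (x k) ≤ x (k + 1)) (m : ℕ) :
    mpMulVec (mpPow A m) (x 0) ≤ x m := by
  induction m with
  | zero => exact mpMulVec_mpId_le _
  | succ m ih => exact (mpMulVec_mpMul_le _ _ _).trans ((mpMulVec_mono A ih).trans (h m))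

/-- The starting index `j` is arbitrary because the outermost factor of a power is the one applied
last, so the induction step needs the bound for the sequence shifted by one. -/
theorem mpPow_backward {n : ℕ} {C : Matrix (Fin n) (Fin n) EReal} {x : ℕ → Fin n → EReal}
    (h : ∀ k, mpMulVec C (x (k + 1)) ≤ x k) (m j : ℕ) :
    mpMulVec (mpPow C m) (x (j + m)) ≤ x j := by
  induction m generalizing j with
  | zero => exact mpMulVec_mpId_le _
  | succ m ih =>
    have e : j + (m + 1) = (j + 1) + m := by omega
    rw [e]
    exact (mpMulVec_mpMul_le _ _ _).trans ((mpMulVec_mono C (ih (j + 1))).trans (h j))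

/-- necessary condition `(ℬ^♯)^m ⊗ 𝒜^m ⊗ x(0) ≤ x(0)` for all `m ≥ 1`. -/
theorem necessary_power_condition {n : ℕ} (𝒜 ℬ : Matrix (Fin n) (Fin n) EReal)
    (x : ℕ → Fin n → EReal)
    (hx : ∀ k : ℕ, 1 ≤ k →
        mpMulVec 𝒜 (x (k - 1)) ≤ x k ∧ x k ≤ mnMulVec ℬ (x (k - 1))) :
    ∀ m : ℕ, 1 ≤ m →
      mpMulVec (mpMul (mpPow (conjM ℬ) m) (mpPow 𝒜 m)) (x 0) ≤ x 0 := by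
  intro m _
  have hA : ∀ k, mpMulVec 𝒜 (x k) ≤ x (k + 1) := fun k => (hx (k + 1) (by omega)).1
  have hB : ∀ k, mpMulVec (conjM ℬ) (x (k + 1)) ≤ x k := fun k =>
    (mpMulVec_conjM_le_iff _ _ _).2 (hx (k + 1) (by omega)).2
  have hback := mpPow_backward hB m 0
  rw [zero_add] at hback
  exact (mpMulVec_mpMul_le _ _ _).trans ((mpMulVec_mono _ (mpPow_forward hA m)).trans hback)
end
end

section
/- Let 𝒜 and ℬ be m×n matrices over the extended reals ℝ̄. If there exists a vector x ∈ ℝ^n all of whose entries are real numbers such that 𝒜 ⊗ x ≤ ℬ ⊗' x, then 𝒜_{ij} ≤ ℬ_{ij} for all indices i, j. -/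
noncomputable section

/-- if `𝒜 ⊗ x ≤ ℬ ⊗' x` for some real vector `x`, then `𝒜 ≤ ℬ` entrywise. -/
theorem entrywise_le_of_exists {m n : ℕ} (𝒜 ℬ : Matrix (Fin m) (Fin n) EReal)
    (x : Fin n → EReal) (hxreal : ∀ i, ∃ r : ℝ, x i = (r : EReal))
    (h : mpMulVec 𝒜 x ≤ mnMulVec ℬ x) :
    ∀ i j, 𝒜 i j ≤ ℬ i j := by
  intro i j
  obtain ⟨r, hr⟩ := hxreal j
  -- The supremum dominates, and the infimum is dominated by, its `j`-th term.
  have h1 : 𝒜 i j + x j ≤ mnAdd (ℬ i j) (x j) :=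
    (le_iSup (fun k => 𝒜 i k + x k) j).trans
      ((h i).trans (iInf_le (fun k => mnAdd (ℬ i k) (x k)) j))
  -- Both additions agree when one summand is real, and a real summand cancels.
  rw [hr] at h1
  have h2 : mnAdd (ℬ i j) (r : EReal) = ℬ i j + r := by
    unfold mnAdd
    rw [EReal.neg_add (by simp) (by simp), neg_neg, sub_eq_add_neg, neg_neg]
  rw [h2] at h1
  exact (EReal.addLECancellable_coe r).add_le_add_iff_right.1 h1
end
end

section
/- (Fastest p-periodic trajectory.) Let 𝒜 and ℬ be n×n matrices over the extended reals ℝ̄, let λ be a real number, let p ≥ 1 be an integer, and let x(0) ∈ ℝ̄^n satisfy 𝒜^p ⊗ x(0) = pλ + x(0) (entrywise). Then the trajectory x(k) = 𝒜^k ⊗ x(0) satisfies the upper-bound constraints x(k) ≤ ℬ ⊗' x(k-1) for all k ≥ 1 if and only if 𝒜^i ⊗ x(0) ≤ ℬ ⊗' (𝒜^{i-1} ⊗ x(0)) for all i ∈ {1, …, p}. -/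
/-!
Max-plus matrix-vector multiplication is associative and commutes with adding a real constant.
Hence, with `x(k) = 𝒜^k ⊗ x(0)`, the eigenvector hypothesis propagates along the trajectory:
`x(k + p) = pλ + x(k)` for every `k` (`traj_add_period`). The upper-bound constraint is preserved
when the same real constant is added to both vectors (`add_mnMulVec_le`), so the constraint at
index `k + p` follows from the one at index `k`, and the constraints at `1, …, p` imply all others.

Over the extended reals the one delicate point is that `a + ·` commutes with suprema even for
`a = ±∞`; for finite families this holds because the supremum is attained, or equals `⊥`, which
is absorbing, when the family is empty.
-/

noncomputable section

theorem add_iSup_fin {n : ℕ} (a : EReal) (f : Fin n → EReal) :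
    a + ⨆ k, f k = ⨆ k, a + f k := by
  apply le_antisymm
  · rcases isEmpty_or_nonempty (Fin n) with h | h
    · simp
    · obtain ⟨i, hi⟩ := exists_eq_ciSup_of_finite (f := f)
      rw [← hi]
      exact le_iSup (fun k => a + f k) i
  · exact iSup_le fun k => add_le_add le_rfl (le_iSup f k)

theorem mpMulVec_mpMul {n : ℕ} (A B : Matrix (Fin n) (Fin n) EReal) (x : Fin n → EReal) :
    mpMulVec (mpMul A B) x = mpMulVec A (mpMulVec B x) := by
  funext i
  simp only [mpMulVec, mpMul, add_iSup_fin]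
  rw [iSup_comm]
  congr 1
  funext j
  rw [add_comm, add_iSup_fin]
  congr 1
  funext k
  rw [add_comm, add_assoc]

theorem mpMulVec_mpId {n : ℕ} (x : Fin n → EReal) : mpMulVec (mpId n) x = x := by
  funext i
  apply le_antisymm
  · refine iSup_le fun k => ?_
    by_cases h : i = k
    · simp [mpId, h]
    · simp [mpId, h]
  · refine le_trans ?_ (le_iSup (fun k => mpId n i k + x k) i)
    simp [mpId]

theorem mpMulVec_add {n : ℕ} (A : Matrix (Fin n) (Fin n) EReal) (c : EReal)
    (x : Fin n → EReal) :
    mpMulVec A (fun i => c + x i) = fun i => c + mpMulVec A x i := by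
  funext i
  simp only [mpMulVec, add_iSup_fin, add_left_comm]

/-- The two infinity conventions do not clash when the added constant is real. -/
theorem mnAdd_coe_add (c : ℝ) (a b : EReal) :
    mnAdd a ((c : EReal) + b) = (c : EReal) + mnAdd a b := by
  have h : ∀ y : EReal, -((c : EReal) + y) = -(c : EReal) + -y := fun y => by
    rw [EReal.neg_add (by simp) (by simp), sub_eq_add_neg]
  have h' : ∀ y : EReal, -(-(c : EReal) + y) = (c : EReal) + -y := fun y => by
    rw [← EReal.coe_neg, EReal.neg_add (by simp) (by simp), sub_eq_add_neg]
    simp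
  rw [mnAdd, mnAdd, h, add_left_comm, h']

theorem add_mnMulVec_le {n : ℕ} (B : Matrix (Fin n) (Fin n) EReal) (c : ℝ)
    (y : Fin n → EReal) (i : Fin n) :
    (c : EReal) + mnMulVec B y i ≤ mnMulVec B (fun j => (c : EReal) + y j) i := by
  refine le_iInf fun k => ?_
  rw [mnAdd_coe_add]
  exact add_le_add le_rfl (iInf_le (fun k => mnAdd (B i k) (y k)) k)

/-- The trajectory advances by the constant `c` every `p` steps as soon as it does so once. -/
theorem traj_add_period {n : ℕ} (A : Matrix (Fin n) (Fin n) EReal) (c : EReal) (p : ℕ)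
    (x0 : Fin n → EReal) (heig : mpMulVec (mpPow A p) x0 = fun i => c + x0 i) (k : ℕ) :
    mpMulVec (mpPow A (k + p)) x0 = fun i => c + mpMulVec (mpPow A k) x0 i := by
  induction k with
  | zero => simpa only [Nat.zero_add, mpPow, mpMulVec_mpId] using heig
  | succ k ih =>
    rw [Nat.succ_add, mpPow, mpPow, mpMulVec_mpMul, mpMulVec_mpMul, ih, mpMulVec_add]

/-- fastest p-periodic trajectory. -/
theorem fastest_p_periodic {n : ℕ} (𝒜 ℬ : Matrix (Fin n) (Fin n) EReal)
    (lam : ℝ) (p : ℕ) (hp : 1 ≤ p) (x0 : Fin n → EReal)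
    (heig : mpMulVec (mpPow 𝒜 p) x0 = fun i => (((p : ℝ) * lam : ℝ) : EReal) + x0 i) :
    (∀ k : ℕ, 1 ≤ k →
        mpMulVec (mpPow 𝒜 k) x0 ≤ mnMulVec ℬ (mpMulVec (mpPow 𝒜 (k - 1)) x0)) ↔
      (∀ i : ℕ, 1 ≤ i → i ≤ p →
        mpMulVec (mpPow 𝒜 i) x0 ≤ mnMulVec ℬ (mpMulVec (mpPow 𝒜 (i - 1)) x0)) := by
  refine ⟨fun h i hi _ => h i hi, fun h k => ?_⟩
  induction k using Nat.strong_induction_on with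
  | _ k ih =>
    intro hk
    rcases le_or_gt k p with hkp | hkp
    · exact h k hk hkp
    · obtain ⟨m, rfl⟩ : ∃ m, k = m + 1 + p := ⟨k - 1 - p, by omega⟩
      have hm := ih (m + 1) (by omega) (by omega)
      rw [show m + 1 + p - 1 = m + p by omega, traj_add_period 𝒜 _ p x0 heig,
        traj_add_period 𝒜 _ p x0 heig]
      intro i
      exact (add_le_add le_rfl (hm i)).trans (add_mnMulVec_le ℬ _ _ i)
end
end

section
/- (Slowest q-periodic trajectory.) Let 𝒜 and ℬ be n×n matrices over the extended reals ℝ̄, let μ be a real number, let q ≥ 1 be an integer, and let x(0) ∈ ℝ̄^n satisfy ℬ^{q'} ⊗' x(0) = qμ + x(0) (entrywise, min-plus powers). Then the trajectory x(k) = ℬ^{k'} ⊗' x(0) satisfies the lower-bound constraints 𝒜 ⊗ x(k-1) ≤ x(k) for all k ≥ 1 if and only if 𝒜 ⊗ (ℬ^{(i-1)'} ⊗' x(0)) ≤ ℬ^{i'} ⊗' x(0) for all i ∈ {1, …, q}. -/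
/-!
Write `x k = ℬ^{k'} ⊗' x0` and `c = q * mu`. Min-plus addition is associative and distributes over
arbitrary infima, so `x (k + 1) = ℬ ⊗' x k` (`mnMulVec_mnPow_succ`). Adding a real scalar to all
entries commutes with both the min-plus and the max-plus matrix-vector product (`mnMulVec_shift`,
`mpMulVec_shift`); hence the hypothesis `x q = c + x 0` propagates to `x (k + q) = c + x k` for
every `k` (`mnPow_periodic`). The constraint at step `k + q` is therefore the constraint at step
`k` shifted by `c` on both sides, and the first `q` constraints imply all others by strong
induction.

The infinite entries need care only in two places: `a + ⨆ f = ⨆ (a + f)` holds in `EReal` without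
any side condition because `⊥` is absorbing, and for a real scalar the two additions agree.
-/

noncomputable section

/-- Addition distributes over arbitrary suprema, with no finiteness or non-emptiness condition:
`⊥` is both the empty supremum and absorbing. -/
theorem ereal_add_iSup {ι : Sort*} (a : EReal) (f : ι → EReal) :
    a + (⨆ i, f i) = ⨆ i, a + f i := by
  apply le_antisymm
  · apply EReal.add_le_of_forall_lt
    intro a' ha b' hb
    obtain ⟨i, hi⟩ := lt_iSup_iff.1 hb
    exact (add_le_add ha.le hi.le).trans (le_iSup (fun i => a + f i) i)
  · exact iSup_le fun i => add_le_add le_rfl (le_iSup f i)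

theorem ereal_neg_iSup {ι : Sort*} (f : ι → EReal) : -(⨆ i, f i) = ⨅ i, -f i :=
  EReal.negOrderIso.map_iSup f

theorem ereal_neg_iInf {ι : Sort*} (f : ι → EReal) : -(⨅ i, f i) = ⨆ i, -f i :=
  EReal.negOrderIso.map_iInf f

theorem mnAdd_comm (a b : EReal) : mnAdd a b = mnAdd b a := by
  simp only [mnAdd, add_comm]

theorem mnAdd_assoc (a b c : EReal) : mnAdd (mnAdd a b) c = mnAdd a (mnAdd b c) := by
  simp only [mnAdd, neg_neg, add_assoc]

theorem mnAdd_iInf {ι : Sort*} (a : EReal) (f : ι → EReal) :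
    mnAdd a (⨅ i, f i) = ⨅ i, mnAdd a (f i) := by
  simp only [mnAdd, ereal_neg_iInf, ereal_add_iSup, ereal_neg_iSup]

theorem iInf_mnAdd {ι : Sort*} (a : EReal) (f : ι → EReal) :
    mnAdd (⨅ i, f i) a = ⨅ i, mnAdd (f i) a := by
  simp only [mnAdd_comm _ a, mnAdd_iInf]

/-- For a real scalar the max-plus and min-plus conventions for `+` agree. -/
theorem coe_add_eq_mnAdd (c : ℝ) (a : EReal) : (c : EReal) + a = mnAdd c a := by
  rw [mnAdd, EReal.neg_add (by simp) (by simp), sub_eq_add_neg, neg_neg, neg_neg]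

theorem mnMulVec_mnMul {m n p : ℕ} (A : Matrix (Fin m) (Fin n) EReal)
    (B : Matrix (Fin n) (Fin p) EReal) (x : Fin p → EReal) :
    mnMulVec (mnMul A B) x = mnMulVec A (mnMulVec B x) := by
  funext i
  simp only [mnMulVec, mnMul, iInf_mnAdd, mnAdd_iInf, mnAdd_assoc]
  exact iInf_comm

theorem mnMulVec_mnId {n : ℕ} (x : Fin n → EReal) : mnMulVec (mnId n) x = x := by
  funext i
  apply le_antisymm
  · exact (iInf_le _ i).trans (by simp [mnId, mnAdd])
  · refine le_iInf fun k => ?_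
    by_cases h : i = k
    · subst h
      simp [mnId, mnAdd]
    · simp [mnId, mnAdd, h]

theorem mnMulVec_mnPow_succ {n : ℕ} (B : Matrix (Fin n) (Fin n) EReal) (k : ℕ)
    (x : Fin n → EReal) :
    mnMulVec (mnPow B (k + 1)) x = mnMulVec B (mnMulVec (mnPow B k) x) :=
  mnMulVec_mnMul B (mnPow B k) x

theorem mnMulVec_shift {m n : ℕ} (A : Matrix (Fin m) (Fin n) EReal) (c : ℝ)
    (x : Fin n → EReal) :
    mnMulVec A (fun i => (c : EReal) + x i) = fun i => (c : EReal) + mnMulVec A x i := by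
  funext i
  simp only [mnMulVec, coe_add_eq_mnAdd, mnAdd_iInf]
  refine iInf_congr fun k => ?_
  rw [← mnAdd_assoc, mnAdd_comm (A i k), mnAdd_assoc]

theorem mpMulVec_shift {m n : ℕ} (A : Matrix (Fin m) (Fin n) EReal) (c : ℝ)
    (x : Fin n → EReal) :
    mpMulVec A (fun i => (c : EReal) + x i) = fun i => (c : EReal) + mpMulVec A x i := by
  funext i
  simp only [mpMulVec, ereal_add_iSup]
  exact iSup_congr fun k => add_left_comm _ _ _

/-- If the orbit of `x` under `B` returns after `q` steps shifted by the real scalar `c`, then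
every point of the orbit does. -/
theorem mnPow_periodic {n : ℕ} (B : Matrix (Fin n) (Fin n) EReal) (c : ℝ) (q : ℕ)
    (x : Fin n → EReal) (h : mnMulVec (mnPow B q) x = fun i => (c : EReal) + x i) (k : ℕ) :
    mnMulVec (mnPow B (k + q)) x = fun i => (c : EReal) + mnMulVec (mnPow B k) x i := by
  induction k with
  | zero =>
    rw [Nat.zero_add, h]
    simp only [mnPow, mnMulVec_mnId]
  | succ k ih =>
    rw [Nat.add_right_comm, mnMulVec_mnPow_succ, ih, mnMulVec_shift, ← mnMulVec_mnPow_succ]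

/-- slowest q-periodic trajectory. -/
theorem slowest_q_periodic {n : ℕ} (𝒜 ℬ : Matrix (Fin n) (Fin n) EReal)
    (mu : ℝ) (q : ℕ) (hq : 1 ≤ q) (x0 : Fin n → EReal)
    (heig : mnMulVec (mnPow ℬ q) x0 = fun i => (((q : ℝ) * mu : ℝ) : EReal) + x0 i) :
    (∀ k : ℕ, 1 ≤ k →
        mpMulVec 𝒜 (mnMulVec (mnPow ℬ (k - 1)) x0) ≤ mnMulVec (mnPow ℬ k) x0) ↔
      (∀ i : ℕ, 1 ≤ i → i ≤ q →
        mpMulVec 𝒜 (mnMulVec (mnPow ℬ (i - 1)) x0) ≤ mnMulVec (mnPow ℬ i) x0) := by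
  constructor
  · intro h i hi _
    exact h i hi
  · intro h k
    induction k using Nat.strong_induction_on with
    | _ k ih =>
      intro hk
      by_cases hkq : k ≤ q
      · exact h k hk hkq
      · obtain ⟨j, rfl⟩ : ∃ j, k = j + 1 + q := ⟨k - q - 1, by omega⟩
        have hj := ih (j + 1) (by omega) (by omega)
        have e : j + 1 + q - 1 = j + q := by omega
        rw [Nat.add_sub_cancel] at hj
        rw [e, mnPow_periodic ℬ _ q x0 heig, mnPow_periodic ℬ _ q x0 heig, mpMulVec_shift]
        exact fun i => add_le_add le_rfl (hj i)
end
end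

section
/- Let B be a d×d matrix with entries in ℝ ∪ {-∞} such that all circuits of its weighted graph have nonpositive weight, i.e. (B^k)_{ii} ≤ 0 for every i and every k ∈ {1, …, d} (max-plus powers). Then the max-plus Kleene star of B is obtained after finitely many powers: B* = E ⊕ B ⊕ B^2 ⊕ ⋯ ⊕ B^{d-1}; in particular all entries of B* are smaller than +∞. -/
/-!
A max-plus power `B^k` records optimal walk weights: `(B^k)_{ij}` is the largest weight of a walk of
length `k` from `i` to `j`. Both directions are needed here: `exists_walk` (the optimum is attained,
since the index set is finite) and `walk_le_mpPow` (every walk is a lower bound).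

If `k ≥ d`, an optimal walk of length `k` visits some vertex twice among its first `d + 1` vertices,
so it contains a circuit of length between `1` and `d`, of nonpositive weight. Deleting it gives a
shorter walk with the same ends and at least the same weight, so by strong induction on `k` every
power is dominated by the powers below `d` (`mpPow_le_iSup_lt`). Entries of powers are never `+∞`,
hence neither is a maximum of finitely many of them.
-/

noncomputable section

/-- An entry of a max-plus product is attained at some intermediate index. -/
lemma exists_mpMul_eq {d : ℕ} [Nonempty (Fin d)] (A B : Matrix (Fin d) (Fin d) EReal)
    (i j : Fin d) : ∃ m, mpMul A B i j = A i m + B m j := by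
  obtain ⟨m, hm⟩ := exists_eq_ciSup_of_finite (f := fun m => A i m + B m j)
  exact ⟨m, hm.symm⟩

lemma le_mpPow_succ {d : ℕ} (B : Matrix (Fin d) (Fin d) EReal) (k : ℕ) (i m j : Fin d) :
    B i m + mpPow B k m j ≤ mpPow B (k + 1) i j :=
  le_iSup (fun m => B i m + mpPow B k m j) m

lemma mpPow_add_le_s19 {d : ℕ} (B : Matrix (Fin d) (Fin d) EReal) (a c : ℕ) (i l j : Fin d) :
    mpPow B a i l + mpPow B c l j ≤ mpPow B (a + c) i j := by
  have : Nonempty (Fin d) := ⟨i⟩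
  induction a generalizing i with
  | zero =>
    by_cases h : i = l
    · subst h; simp [mpPow, mpId]
    · simp [mpPow, mpId, h]
  | succ a ih =>
    obtain ⟨m, hm⟩ := exists_mpMul_eq B (mpPow B a) i l
    have h : mpPow B (a + 1) i l = B i m + mpPow B a m l := hm
    rw [h, add_assoc, Nat.add_right_comm]
    exact (add_le_add le_rfl (ih m)).trans (le_mpPow_succ B (a + c) i m j)

/-- The weight of a walk bounds the corresponding power from below. The summand
`mpId d (p n) j` encodes the condition that the walk ends at `j`. -/
lemma walk_le_mpPow {d : ℕ} (B : Matrix (Fin d) (Fin d) EReal) (n : ℕ) (p : ℕ → Fin d)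
    (j : Fin d) :
    (∑ t ∈ Finset.range n, B (p t) (p (t + 1))) + mpId d (p n) j ≤ mpPow B n (p 0) j := by
  induction n generalizing p with
  | zero => simp [mpPow]
  | succ n ih =>
    rw [Finset.sum_range_succ', add_comm (Finset.sum _ _), add_assoc]
    exact (add_le_add le_rfl (ih fun t => p (t + 1))).trans (le_mpPow_succ B n (p 0) (p 1) j)

/-- Each entry of a power is bounded by the weight of a single walk. The summand
`mpId d (p k) j` is `-∞` unless the walk ends at `j`. -/
lemma exists_walk {d : ℕ} (B : Matrix (Fin d) (Fin d) EReal) (k : ℕ) (i j : Fin d) :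
    ∃ p : ℕ → Fin d, p 0 = i ∧
      mpPow B k i j ≤ (∑ t ∈ Finset.range k, B (p t) (p (t + 1))) + mpId d (p k) j := by
  have : Nonempty (Fin d) := ⟨i⟩
  induction k generalizing i with
  | zero => exact ⟨fun _ => i, rfl, by simp [mpPow]⟩
  | succ k ih =>
    obtain ⟨m, hm⟩ := exists_mpMul_eq B (mpPow B k) i j
    obtain ⟨p, hp, hle⟩ := ih m
    refine ⟨fun t => Nat.casesOn t i p, rfl, ?_⟩
    have h : mpPow B (k + 1) i j = B i m + mpPow B k m j := hm
    rw [h, Finset.sum_range_succ', add_comm (Finset.sum _ _), add_assoc]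
    subst hp
    exact add_le_add le_rfl hle

/-- `walk_le_mpPow` for the stretch of a walk between times `a` and `a + n`. -/
lemma segment_le_mpPow {d : ℕ} (B : Matrix (Fin d) (Fin d) EReal) (p : ℕ → Fin d) (a n : ℕ) :
    ∑ t ∈ Finset.range n, B (p (a + t)) (p (a + t + 1)) ≤ mpPow B n (p a) (p (a + n)) := by
  have h := walk_le_mpPow B n (fun t => p (a + t)) (p (a + n))
  simpa [mpId, add_assoc] using h

/-- Deleting a circuit: every power is dominated by the powers of exponent less than `d`. -/
lemma mpPow_le_iSup_lt {d : ℕ} (B : Matrix (Fin d) (Fin d) EReal)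
    (hcirc : ∀ i : Fin d, ∀ k : ℕ, 1 ≤ k → k ≤ d → mpPow B k i i ≤ 0) (k : ℕ) (i j : Fin d) :
    mpPow B k i j ≤ ⨆ m : Fin d, mpPow B (m : ℕ) i j := by
  induction k using Nat.strong_induction_on with
  | _ k ih =>
  by_cases hk : k < d
  · exact le_iSup (fun m : Fin d => mpPow B (m : ℕ) i j) ⟨k, hk⟩
  obtain ⟨p, rfl, hle⟩ := exists_walk B k i j
  -- Pigeonhole among the `d + 1` vertices `p 0, …, p d`; `n` is the length of the circuit.
  obtain ⟨a, n, hn, han, hpa⟩ : ∃ a n, 1 ≤ n ∧ a + n ≤ d ∧ p (a + n) = p a := by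
    obtain ⟨x, y, hxy, h⟩ := Fintype.exists_ne_map_eq_of_card_lt
      (fun t : Fin (d + 1) => p t) (by simp)
    have hne : (x : ℕ) ≠ y := fun h => hxy (Fin.ext h)
    rcases Nat.lt_or_gt_of_ne hne with hlt | hlt
    · exact ⟨x, y - x, by omega, by omega, by rw [Nat.add_sub_cancel' hlt.le]; exact h.symm⟩
    · exact ⟨y, x - y, by omega, by omega, by rw [Nat.add_sub_cancel' hlt.le]; exact h⟩
  obtain ⟨c, rfl⟩ : ∃ c, k = a + n + c := ⟨k - (a + n), by omega⟩
  refine le_trans ?_ (ih (a + c) (by omega))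
  rw [Finset.sum_range_add, Finset.sum_range_add, add_assoc (_ + _ : EReal)] at hle
  have h1 : ∑ t ∈ Finset.range a, B (p t) (p (t + 1)) ≤ mpPow B a (p 0) (p a) := by
    simpa using segment_le_mpPow B p 0 a
  have h2 : ∑ t ∈ Finset.range n, B (p (a + t)) (p (a + t + 1)) ≤ 0 := by
    have h := segment_le_mpPow B p a n
    rw [hpa] at h
    exact h.trans (hcirc _ n hn (by omega))
  have h3 := walk_le_mpPow B c (fun t => p (a + n + t)) j
  rw [add_zero, hpa] at h3
  calc mpPow B (a + n + c) (p 0) j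
      ≤ _ := hle
    _ ≤ mpPow B a (p 0) (p a) + 0 + mpPow B c (p a) j := add_le_add (add_le_add h1 h2) h3
    _ ≤ mpPow B (a + c) (p 0) j := by rw [add_zero]; exact mpPow_add_le_s19 B a c _ _ _

lemma mpPow_ne_top {d : ℕ} (B : Matrix (Fin d) (Fin d) EReal) (hB : ∀ i j, B i j ≠ ⊤)
    (k : ℕ) (i j : Fin d) : mpPow B k i j ≠ ⊤ := by
  have : Nonempty (Fin d) := ⟨i⟩
  induction k generalizing i with
  | zero => by_cases h : i = j <;> simp [mpPow, mpId, h]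
  | succ k ih =>
    obtain ⟨m, hm⟩ := exists_mpMul_eq B (mpPow B k) i j
    have h : mpPow B (k + 1) i j = B i m + mpPow B k m j := hm
    rw [h]
    exact (EReal.add_lt_top (hB i m) (ih m)).ne

/-- if all circuits of `B` have nonpositive weight then
`B* = E ⊕ B ⊕ ⋯ ⊕ B^{d-1}` and all entries of `B*` are `< +∞`. -/
theorem star_finite_of_nonpos_circuits {d : ℕ} (B : Matrix (Fin d) (Fin d) EReal)
    (hB : ∀ i j, B i j ≠ ⊤)
    (hcirc : ∀ i : Fin d, ∀ k : ℕ, 1 ≤ k → k ≤ d → mpPow B k i i ≤ 0) :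
    (∀ i j, mpStar B i j = ⨆ k : Fin d, mpPow B (k : ℕ) i j) ∧
      (∀ i j, mpStar B i j < ⊤) := by
  have hstar : ∀ i j, mpStar B i j = ⨆ k : Fin d, mpPow B (k : ℕ) i j := fun i j =>
    le_antisymm (iSup_le fun k => mpPow_le_iSup_lt B hcirc k i j)
      (iSup_le fun m => le_iSup (fun k => mpPow B k i j) (m : ℕ))
  refine ⟨hstar, fun i j => ?_⟩
  have : Nonempty (Fin d) := ⟨i⟩
  obtain ⟨m, hm⟩ := exists_eq_ciSup_of_finite (f := fun m : Fin d => mpPow B (m : ℕ) i j)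
  rw [hstar, ← hm]
  exact (mpPow_ne_top B hB m i j).lt_top
end
end
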